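/- Let ρ and ρ′ be d×d complex density matrices that are not unitarily equivalent (i.e., their eigenvalue vectors, with multiplicity, differ as multisets). Then the following are equivalent: (i) S(ρ) < S(ρ′) and rank(ρ) ≤ rank(ρ′), where S(ρ) = −Tr(ρ ln ρ) is the von Neumann entropy; (ii) there exist an integer n ≥ 1 and a density matrix ρ′_n of size d^n×d^n (a state on n copies of the d-dimensional system, indexed by n-tuples) such that λ(ρ′_n) ≺ λ(ρ^{⊗n}) and, for every i ∈ {1,…,n}, the partial trace of ρ′_n over all tensor factors except the i-th equals ρ′. -/

import Mathlib

/-- The sum of the `k` largest entries of a vector (equivalently, for vectors with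
nonnegative entries, the maximum of `∑ i ∈ s, x i` over subsets `s` of cardinality at
most `k`; this also accounts for padding with zeros). -/
noncomputable def topSum {ι : Type*} [Fintype ι] [DecidableEq ι] (x : ι → ℝ) (k : ℕ) : ℝ :=
  ((Finset.univ : Finset ι).powerset.filter (fun s => s.card ≤ k)).sup'
    ⟨∅, by simp⟩ (fun s => ∑ i ∈ s, x i)

/-- A probability vector: nonnegative entries summing to 1. -/
def IsProbVec {ι : Type*} [Fintype ι] (x : ι → ℝ) : Prop :=
  (∀ i, 0 ≤ x i) ∧ ∑ i, x i = 1

/-- `x ≺ y` (majorization, after padding with zeros to a common dimension): every partial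
sum of the `k` largest entries of `x` is at most that of `y`, with equal total sums. -/
def PMaj {ι κ : Type*} [Fintype ι] [DecidableEq ι] [Fintype κ] [DecidableEq κ]
    (x : ι → ℝ) (y : κ → ℝ) : Prop :=
  (∀ k : ℕ, topSum x k ≤ topSum y k) ∧ (∑ i, x i = ∑ j, y j)

/-- Tensor product of two vectors: `(x ⊗ y)_{(i,j)} = x_i y_j`. -/
def pvTensor {ι κ : Type*} (x : ι → ℝ) (y : κ → ℝ) : ι × κ → ℝ :=
  fun p => x p.1 * y p.2

open scoped ComplexOrder

/-- The `n`-fold Kronecker power of a `d × d` matrix, indexed by `n`-tuples. -/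
noncomputable def mpow {d : ℕ} (ρ : Matrix (Fin d) (Fin d) ℂ) (n : ℕ) :
    Matrix (Fin n → Fin d) (Fin n → Fin d) ℂ :=
  Matrix.of fun f g => ∏ j, ρ (f j) (g j)

/-- Partial trace over all tensor factors except the `i`-th:
`(Tr_{≠i} M)_{ab}` sums the entries `M_{f,g}` over all pairs `f, g` of `n`-tuples
with `f i = a`, `g i = b`, agreeing on all other components. -/
noncomputable def ptrExcept {d n : ℕ} (i : Fin n)
    (M : Matrix (Fin n → Fin d) (Fin n → Fin d) ℂ) : Matrix (Fin d) (Fin d) ℂ :=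
  Matrix.of fun a b =>
    ∑ g ∈ Finset.univ.filter (fun g : Fin n → Fin d => g i = a),
      M g (Function.update g i b)

section Majorization

open Finset

variable {ι κ : Type*} [Fintype ι] [DecidableEq ι] [Fintype κ] [DecidableEq κ]

lemma topSum_le_iff {x : ι → ℝ} {k : ℕ} {c : ℝ} :
    topSum x k ≤ c ↔ ∀ s : Finset ι, s.card ≤ k → ∑ i ∈ s, x i ≤ c := by
  simp [topSum, Finset.sup'_le_iff]

lemma sum_le_topSum (x : ι → ℝ) {k : ℕ} {s : Finset ι} (hs : s.card ≤ k) :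
    ∑ i ∈ s, x i ≤ topSum x k :=
  topSum_le_iff.1 le_rfl s hs

lemma exists_topSum_eq (x : ι → ℝ) (k : ℕ) :
    ∃ s : Finset ι, s.card ≤ k ∧ topSum x k = ∑ i ∈ s, x i := by
  obtain ⟨s, hs, h⟩ := Finset.exists_mem_eq_sup'
    (s := (Finset.univ : Finset ι).powerset.filter (fun s => s.card ≤ k)) ⟨∅, by simp⟩
    (fun s => ∑ i ∈ s, x i)
  exact ⟨s, by simpa using hs, h⟩

lemma topSum_comp_equiv (e : ι ≃ κ) (y : κ → ℝ) (k : ℕ) : topSum (y ∘ e) k = topSum y k := by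
  apply le_antisymm
  · refine topSum_le_iff.2 fun s hs => ?_
    have h := sum_le_topSum y (s := s.map e.toEmbedding) (by simpa using hs)
    simpa using h
  · refine topSum_le_iff.2 fun s hs => ?_
    have h := sum_le_topSum (y ∘ e) (s := s.map e.symm.toEmbedding) (by simpa using hs)
    simpa using h

lemma PMaj.comp_equiv {ι' κ' : Type*} [Fintype ι'] [DecidableEq ι'] [Fintype κ'] [DecidableEq κ']
    {x : ι → ℝ} {y : κ → ℝ} (h : PMaj x y) (e : ι' ≃ ι) (f : κ' ≃ κ) : PMaj (x ∘ e) (y ∘ f) := by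
  refine ⟨fun k => ?_, ?_⟩
  · simpa only [topSum_comp_equiv] using h.1 k
  · simpa only [Function.comp_apply, Equiv.sum_comp] using h.2

lemma PMaj.trans {μ : Type*} [Fintype μ] [DecidableEq μ] {x : ι → ℝ} {y : κ → ℝ} {z : μ → ℝ}
    (h : PMaj x y) (h' : PMaj y z) : PMaj x z :=
  ⟨fun k => (h.1 k).trans (h'.1 k), h.2.trans h'.2⟩

/-- The set of vectors majorized by a fixed vector is convex. -/
lemma convex_setOf_pMaj (y : κ → ℝ) : Convex ℝ {x : ι → ℝ | PMaj x y} := by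
  intro x hx z hz a b ha hb hab
  refine ⟨fun k => topSum_le_iff.2 fun s hs => ?_, ?_⟩
  · have h1 := (sum_le_topSum x hs).trans (hx.1 k)
    have h2 := (sum_le_topSum z hs).trans (hz.1 k)
    calc ∑ i ∈ s, (a • x + b • z) i = a * ∑ i ∈ s, x i + b * ∑ i ∈ s, z i := by
          simp [Finset.sum_add_distrib, Finset.mul_sum]
      _ ≤ a * topSum y k + b * topSum y k := by gcongr
      _ = topSum y k := by rw [← add_mul, hab, one_mul]
  · calc ∑ i, (a • x + b • z) i = a * ∑ i, x i + b * ∑ i, z i := by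
          simp [Finset.sum_add_distrib, Finset.mul_sum]
      _ = ∑ j, y j := by rw [hx.2, hz.2, ← add_mul, hab, one_mul]

lemma pMaj_of_mem_convexHull {x y : ι → ℝ}
    (h : x ∈ convexHull ℝ (Set.range fun σ : Equiv.Perm ι => y ∘ σ)) : PMaj x y := by
  refine convexHull_min ?_ (convex_setOf_pMaj y) h
  rintro _ ⟨σ, rfl⟩
  exact ⟨fun k => (topSum_comp_equiv σ y k).le, Equiv.sum_comp σ y⟩

lemma pMaj_mulVec_of_mem_doublyStochastic {D : Matrix ι ι ℝ} (hD : D ∈ doublyStochastic ℝ ι)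
    (y : ι → ℝ) : PMaj (D.mulVec y) y := by
  obtain ⟨w, hw0, hw1, rfl⟩ := exists_eq_sum_perm_of_mem_doublyStochastic hD
  apply pMaj_of_mem_convexHull
  refine mem_convexHull_of_exists_fintype w (fun σ => y ∘ σ) hw0 hw1 (fun σ => ⟨σ, rfl⟩) ?_
  rw [Matrix.sum_mulVec]
  refine Finset.sum_congr rfl fun σ _ => ?_
  rw [Matrix.smul_mulVec, Matrix.permMatrix_mulVec]

lemma PMaj.card_support_le {x : ι → ℝ} {y : κ → ℝ} (h : PMaj x y)
    (hy : ∀ j, 0 ≤ y j) :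
    (univ.filter fun j => y j ≠ 0).card ≤ (univ.filter fun i => x i ≠ 0).card := by
  obtain ⟨s, hs, hs'⟩ := exists_topSum_eq y (univ.filter fun i => x i ≠ 0).card
  have h1 : ∑ i, x i ≤ topSum x (univ.filter fun i => x i ≠ 0).card := by
    rw [← Finset.sum_filter_ne_zero]
    exact sum_le_topSum x le_rfl
  have h2 : ∑ j, y j ≤ ∑ j ∈ s, y j := by
    rw [← hs', ← h.2]; exact h1.trans (h.1 _)
  refine le_trans (Finset.card_le_card fun j hj => ?_) hs
  by_contra hjs
  have h3 : ∑ i ∈ insert j s, y i ≤ ∑ i, y i :=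
    Finset.sum_le_sum_of_subset_of_nonneg (Finset.subset_univ _) fun i _ _ => hy i
  rw [Finset.sum_insert hjs] at h3
  have : y j = 0 := le_antisymm (by linarith) (hy j)
  simp [this] at hj

lemma exists_antitone_equiv {α : Type*} [Fintype α] (x : α → ℝ) :
    ∃ e : Fin (Fintype.card α) ≃ α, Antitone (x ∘ e) := by
  let e := (Fintype.equivFin α).symm
  refine ⟨(Tuple.sort (fun i => - x (e i))).trans e, fun i j hij => ?_⟩
  have := Tuple.monotone_sort (fun i => - x (e i)) hij
  simpa using this

lemma sum_le_sum_filter_lt_of_antitone {N : ℕ} {y : Fin N → ℝ} (hy : Antitone y)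
    (hy0 : ∀ i, 0 ≤ y i) {k : ℕ} {s : Finset (Fin N)} (hs : s.card ≤ k) :
    ∑ i ∈ s, y i ≤ ∑ i with i.val < k, y i := by
  set I : Finset (Fin N) := univ.filter fun i => i.val < k with hI
  rcases le_or_gt N k with hk | hk
  · have : I = univ := by
      ext i; simp [hI]; omega
    rw [this]
    exact Finset.sum_le_sum_of_subset_of_nonneg (Finset.subset_univ _) fun i _ _ => hy0 i
  · have hcI : I.card = k := by
      rw [hI, Fin.card_filter_val_lt]; omega
    have hcard : (s \ I).card ≤ (I \ s).card := by
      have h1 := Finset.card_sdiff_add_card_inter s I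
      have h2 := Finset.card_sdiff_add_card_inter I s
      rw [Finset.inter_comm] at h2
      omega
    have h1 : ∑ i ∈ s \ I, y i ≤ (s \ I).card • y ⟨k, hk⟩ := by
      refine Finset.sum_le_card_nsmul _ _ _ fun i hi => hy ?_
      simp [hI] at hi
      exact Fin.mk_le_of_le_val hi.2
    have h2 : (I \ s).card • y ⟨k, hk⟩ ≤ ∑ i ∈ I \ s, y i := by
      refine Finset.card_nsmul_le_sum _ _ _ fun i hi => hy ?_
      simp [hI] at hi
      exact Fin.le_def.2 hi.1.le
    have h3 : (s \ I).card • y ⟨k, hk⟩ ≤ (I \ s).card • y ⟨k, hk⟩ :=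
      nsmul_le_nsmul_left (hy0 _) hcard
    have h4 := Finset.sum_inter_add_sum_sdiff s I y
    have h5 := Finset.sum_inter_add_sum_sdiff I s y
    rw [Finset.inter_comm] at h5
    linarith

/-- Abel summation against an antitone weight. -/
lemma mul_sum_le_sum_mul_of_antitone {N : ℕ} {c z : Fin (N + 1) → ℝ} (hc : Antitone c)
    (hz : ∀ k : ℕ, 0 ≤ ∑ i with i.val < k, z i) :
    c (Fin.last N) * ∑ i, z i ≤ ∑ i, c i * z i := by
  induction N with
  | zero => simp
  | succ N ih =>
    have hz' : ∀ k : ℕ, 0 ≤ ∑ i : Fin (N + 1) with i.val < k, z i.castSucc := by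
      intro k
      have := hz (min k (N + 1))
      rw [Finset.sum_filter, Fin.sum_univ_castSucc] at this
      have e : ∀ i : Fin (N + 1), i.val ≤ N := fun i => by omega
      simpa [Finset.sum_filter, e] using this
    have h := ih (c := fun i => c i.castSucc) (z := fun i => z i.castSucc)
      (fun i j hij => hc (by simpa using hij)) hz'
    have h0 : 0 ≤ ∑ i : Fin (N + 1), z i.castSucc := by
      have := hz' (N + 1)
      rwa [Finset.filter_true_of_mem fun i _ => i.isLt] at this
    rw [Fin.sum_univ_castSucc, Fin.sum_univ_castSucc (f := fun i => c i * z i)]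
    have h1 : c (Fin.last (N + 1)) ≤ c (Fin.last N).castSucc := hc (Fin.le_last _)
    nlinarith [mul_le_mul_of_nonneg_right h1 h0]

lemma PMaj.sum_mul_le_of_antitone {N : ℕ} {x y c : Fin N → ℝ} (h : PMaj x y) (hy : Antitone y)
    (hy0 : ∀ i, 0 ≤ y i) (hc : Antitone c) : ∑ i, c i * x i ≤ ∑ i, c i * y i := by
  cases N with
  | zero => simp
  | succ N =>
    have := mul_sum_le_sum_mul_of_antitone (z := fun i => y i - x i) hc (fun k => by
      rw [Finset.sum_sub_distrib, sub_nonneg]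
      by_cases hk : k ≤ N + 1
      · refine (sum_le_topSum x ?_).trans ((h.1 k).trans (topSum_le_iff.2 fun s hs =>
          sum_le_sum_filter_lt_of_antitone hy hy0 hs))
        rw [Fin.card_filter_val_lt]; omega
      · rw [Finset.filter_true_of_mem fun i _ => by omega]
        exact h.2.le)
    simp only [mul_sub, Finset.sum_sub_distrib] at this
    rw [h.2] at this
    linarith

/-- Gibbs' inequality, pointwise. -/
lemma sub_le_mul_log_sub {a b : ℝ} (ha : 0 ≤ a) (hb : 0 ≤ b) (hab : a = 0 → b = 0) :
    b - a ≤ b * Real.log b - b * Real.log a := by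
  rcases hb.eq_or_lt with rfl | hb
  · simpa using ha
  · have ha : 0 < a := ha.lt_of_ne' fun h => hb.ne' (hab h)
    have h := Real.log_le_sub_one_of_pos (div_pos ha hb)
    rw [Real.log_div ha.ne' hb.ne'] at h
    have := mul_le_mul_of_nonneg_left h hb.le
    have e : b * (a / b - 1) = a - b := by field_simp
    linarith

lemma eq_of_mul_log_sub_eq {a b : ℝ} (ha : 0 ≤ a) (hb : 0 ≤ b) (hab : a = 0 → b = 0)
    (h : b * Real.log b - b * Real.log a = b - a) : b = a := by
  rcases hb.eq_or_lt with rfl | hb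
  · simpa [eq_comm] using h
  · have ha : 0 < a := ha.lt_of_ne' fun h => hb.ne' (hab h)
    by_contra hne
    have h' := Real.log_lt_sub_one_of_pos (div_pos ha hb) fun h1 => hne
      ((div_eq_one_iff_eq hb.ne').1 h1).symm
    rw [Real.log_div ha.ne' hb.ne'] at h'
    have := mul_lt_mul_of_pos_left h' hb
    have e : b * (a / b - 1) = a - b := by field_simp
    linarith

lemma sum_mul_log_le {α : Type*} [Fintype α] {x y : α → ℝ} (hx : ∀ i, 0 ≤ x i)
    (hy : ∀ i, 0 ≤ y i)
    (hsum : ∑ i, x i = ∑ i, y i) (hxy : ∀ i, x i = 0 → y i = 0) :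
    ∑ i, y i * Real.log (x i) ≤ ∑ i, y i * Real.log (y i) := by
  have := Finset.sum_le_sum fun i (_ : i ∈ univ) => sub_le_mul_log_sub (hx i) (hy i) (hxy i)
  simp only [Finset.sum_sub_distrib] at this
  linarith

lemma eq_of_sum_mul_log_eq {α : Type*} [Fintype α] {x y : α → ℝ} (hx : ∀ i, 0 ≤ x i)
    (hy : ∀ i, 0 ≤ y i)
    (hsum : ∑ i, x i = ∑ i, y i) (hxy : ∀ i, x i = 0 → y i = 0)
    (h : ∑ i, y i * Real.log (x i) = ∑ i, y i * Real.log (y i)) : y = x := by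
  have h1 := (Finset.sum_eq_sum_iff_of_le fun i (_ : i ∈ univ) =>
    sub_le_mul_log_sub (hx i) (hy i) (hxy i)).1 (by
      simp only [Finset.sum_sub_distrib]; linarith)
  ext i
  exact eq_of_mul_log_sub_eq (hx i) (hy i) (hxy i) (h1 i (mem_univ i)).symm

lemma PMaj.eq_zero_of_antitone {N : ℕ} {x y : Fin N → ℝ} (h : PMaj x y)
    (hx : Antitone x) (hy : Antitone y) (hx0 : ∀ i, 0 ≤ x i) (hy0 : ∀ i, 0 ≤ y i)
    {i : Fin N} (hi : x i = 0) : y i = 0 := by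
  have h1 : ∑ j, x j = ∑ j with j.val < i.val, x j := by
    rw [eq_comm]
    refine Finset.sum_subset (Finset.subset_univ _) fun j _ hj => ?_
    have : i ≤ j := by simpa using hj
    exact le_antisymm (hi ▸ hx this) (hx0 j)
  have h2 : ∑ j, y j ≤ ∑ j with j.val < i.val, y j := by
    rw [← h.2, h1]
    refine (sum_le_topSum x ?_).trans ((h.1 i.val).trans (topSum_le_iff.2 fun s hs =>
          sum_le_sum_filter_lt_of_antitone hy hy0 hs))
    rw [Fin.card_filter_val_lt]; omega
  have h3 : ∑ j ∈ insert i (univ.filter fun j => j.val < i.val), y j ≤ ∑ j, y j :=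
    Finset.sum_le_sum_of_subset_of_nonneg (Finset.subset_univ _) fun i _ _ => hy0 i
  rw [Finset.sum_insert (by simp)] at h3
  exact le_antisymm (by linarith) (hy0 i)

lemma PMaj.sum_mul_log_le_of_antitone {N : ℕ} {x y : Fin N → ℝ} (h : PMaj x y)
    (hx : Antitone x) (hy : Antitone y) (hx0 : ∀ i, 0 ≤ x i) (hy0 : ∀ i, 0 ≤ y i)
    (hx1 : ∀ i, x i ≤ 1) :
    ∑ i, x i * Real.log (x i) ≤ ∑ i, y i * Real.log (x i) := by
  set c : Fin N → ℝ := fun i => if x i = 0 then ∑ k, Real.log (x k) else Real.log (x i) with hcdef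
  have hlog : ∀ i, Real.log (x i) ≤ 0 := fun i => Real.log_nonpos (hx0 i) (hx1 i)
  have hle : ∀ i, ∑ k, Real.log (x k) ≤ Real.log (x i) := fun i => by
    rw [← Finset.add_sum_erase _ _ (mem_univ i)]
    have := Finset.sum_nonpos fun k (_ : k ∈ univ.erase i) => hlog k
    linarith
  have hc : Antitone c := by
    intro i j hij
    have hxij := hx hij
    simp only [hcdef]
    split_ifs with h1 h2
    · exact le_rfl
    · exact hle i
    · exact absurd (le_antisymm (by linarith) (hx0 j)) h1
    · exact Real.log_le_log ((hx0 j).lt_of_ne' h1) hxij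
  have := h.sum_mul_le_of_antitone hy hy0 hc
  convert! this using 2 with i _ i _
  · simp only [hcdef]; split_ifs with h1 <;> simp [h1, mul_comm]
  · simp only [hcdef]; split_ifs with h1
    · simp [h.eq_zero_of_antitone hx hy hx0 hy0 h1]
    · rw [mul_comm]

/-- The Shannon entropy is Schur-concave, and strictly so up to permutations. -/
lemma PMaj.sum_mul_log_le {x y : ι → ℝ} (h : PMaj x y) (hx : IsProbVec x) (hy : IsProbVec y) :
    ∑ i, x i * Real.log (x i) ≤ ∑ i, y i * Real.log (y i) ∧
    (∑ i, x i * Real.log (x i) = ∑ i, y i * Real.log (y i) →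
      ∃ σ : Equiv.Perm ι, x = y ∘ σ) := by
  obtain ⟨e, he⟩ := exists_antitone_equiv x
  obtain ⟨f, hf⟩ := exists_antitone_equiv y
  have h' := h.comp_equiv e f
  have hx0 : ∀ i, 0 ≤ (x ∘ e) i := fun i => hx.1 _
  have hy0 : ∀ i, 0 ≤ (y ∘ f) i := fun i => hy.1 _
  have hx1 : ∀ i, (x ∘ e) i ≤ 1 := fun i => by
    rw [← hx.2]; exact Finset.single_le_sum (fun i _ => hx.1 i) (mem_univ (e i))
  have h1 := h'.sum_mul_log_le_of_antitone he hf hx0 hy0 hx1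
  have hz := fun i => h'.eq_zero_of_antitone he hf hx0 hy0 (i := i)
  have h2 := _root_.sum_mul_log_le hx0 hy0 h'.2 hz
  have ex : ∑ i, x i * Real.log (x i) = ∑ i, (x ∘ e) i * Real.log ((x ∘ e) i) :=
    (Equiv.sum_comp e fun i => x i * Real.log (x i)).symm
  have ey : ∑ i, y i * Real.log (y i) = ∑ i, (y ∘ f) i * Real.log ((y ∘ f) i) :=
    (Equiv.sum_comp f fun i => y i * Real.log (y i)).symm
  rw [ex, ey]
  refine ⟨h1.trans h2, fun heq => ?_⟩
  have h3 := eq_of_sum_mul_log_eq hx0 hy0 h'.2 hz (le_antisymm h2 (heq ▸ h1))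
  refine ⟨e.symm.trans f, ?_⟩
  ext i
  have := congrFun h3 (e.symm i)
  simpa using this.symm

end Majorization

section ProductVectors

open Finset

variable {α : Type*}

/-- The `n`-fold tensor power of a vector, indexed by `n`-tuples. -/
def powVec (p : α → ℝ) (n : ℕ) : (Fin n → α) → ℝ := fun x => ∏ k, p (x k)

lemma powVec_nonneg {p : α → ℝ} (hp : ∀ a, 0 ≤ p a) (n : ℕ) (x : Fin n → α) : 0 ≤ powVec p n x :=
  Finset.prod_nonneg fun _ _ => hp _

lemma powVec_ne_zero_iff {p : α → ℝ} {n : ℕ} {x : Fin n → α} :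
    powVec p n x ≠ 0 ↔ ∀ k, p (x k) ≠ 0 := by
  simp [powVec, Finset.prod_ne_zero_iff]

variable [Fintype α]

lemma sum_prod_eq_prod_sum {R : Type*} [CommSemiring R] {n : ℕ} (f : Fin n → α → R) :
    ∑ x : Fin n → α, ∏ k, f k (x k) = ∏ k, ∑ a, f k a := by
  classical
  rw [Finset.prod_univ_sum]
  simp

lemma sum_powVec (p : α → ℝ) (n : ℕ) : ∑ x, powVec p n x = (∑ a, p a) ^ n := by
  simp only [powVec]
  rw [sum_prod_eq_prod_sum (fun _ => p)]
  simp

lemma IsProbVec.powVec {p : α → ℝ} (hp : IsProbVec p) (n : ℕ) : IsProbVec (powVec p n) :=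
  ⟨powVec_nonneg hp.1 n, by rw [sum_powVec, hp.2, one_pow]⟩

lemma powVec_marginal [DecidableEq α] {p : α → ℝ} (hp : IsProbVec p) {n : ℕ} (k : Fin n) (a : α) :
    ∑ x with x k = a, powVec p n x = p a := by
  have h := sum_prod_eq_prod_sum (n := n)
    (fun l b => if l = k then (if b = a then p b else 0) else p b)
  rw [Finset.prod_eq_single k (fun l _ hl => by simp [hl, hp.2]) (by simp)] at h
  simp only [if_true, Finset.sum_ite_eq', mem_univ] at h
  rw [← h, Finset.sum_filter]
  refine Finset.sum_congr rfl fun x _ => ?_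
  split_ifs with hx
  · refine Finset.prod_congr rfl fun l _ => ?_
    split_ifs with h1 h2
    · rfl
    · exact absurd (h1 ▸ hx) h2
    · rfl
  · exact (Finset.prod_eq_zero (mem_univ k) (by simp [hx])).symm

lemma exists_perm_of_card_fiber_eq {β : Type*} [DecidableEq β] {f g : α → β}
    (h : ∀ b, (univ.filter fun a => f a = b).card = (univ.filter fun a => g a = b).card) :
    ∃ σ : Equiv.Perm α, f = g ∘ σ := by
  let e (b : β) : {a // f a = b} ≃ {a // g a = b} := Fintype.equivOfCardEq (by
    rw [Fintype.card_subtype, Fintype.card_subtype, h b])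
  refine ⟨Equiv.ofFiberEquiv e, ?_⟩
  ext a
  exact (Equiv.ofFiberEquiv_map e a).symm

/-- Two real families with the same power sums agree up to a permutation. -/
lemma exists_perm_of_sum_pow_eq {p q : α → ℝ} (h : ∀ k : ℕ, ∑ a, p a ^ k = ∑ a, q a ^ k) :
    ∃ σ : Equiv.Perm α, p = q ∘ σ := by
  classical
  have hpoly : ∀ g : Polynomial ℝ, ∑ a, g.eval (p a) = ∑ a, g.eval (q a) := by
    intro g
    simp only [Polynomial.eval_eq_sum_range]
    rw [Finset.sum_comm, Finset.sum_comm (s := univ (α := α))]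
    refine Finset.sum_congr rfl fun k _ => ?_
    rw [← Finset.mul_sum, ← Finset.mul_sum, h k]
  refine exists_perm_of_card_fiber_eq fun v => ?_
  set s : Finset ℝ := (univ.image p ∪ univ.image q).erase v with hs
  set g : Polynomial ℝ := ∏ u ∈ s, (Polynomial.X - Polynomial.C u) with hg
  have hv : g.eval v ≠ 0 := by
    rw [hg, Polynomial.eval_prod, Finset.prod_ne_zero_iff]
    intro u hu
    have : u ≠ v := Finset.ne_of_mem_erase hu
    simpa [sub_eq_zero] using this.symm
  have hu : ∀ u ∈ univ.image p ∪ univ.image q, g.eval u = if u = v then g.eval v else 0 := by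
    intro u hu
    split_ifs with h1
    · rw [h1]
    · rw [hg, Polynomial.eval_prod]
      exact Finset.prod_eq_zero (Finset.mem_erase.2 ⟨h1, hu⟩) (by simp)
  have h1 := hpoly g
  rw [Finset.sum_congr rfl fun a _ => hu (p a) (by simp),
    Finset.sum_congr rfl fun a _ => hu (q a) (by simp), ← Finset.sum_filter,
    ← Finset.sum_filter, Finset.sum_const, Finset.sum_const, nsmul_eq_mul, nsmul_eq_mul] at h1
  exact_mod_cast mul_right_cancel₀ hv h1

lemma exists_perm_of_powVec_eq {p q : α → ℝ} (hp : ∀ a, 0 ≤ p a) (hq : ∀ a, 0 ≤ q a)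
    {n : ℕ} (hn : n ≠ 0) {σ : Equiv.Perm (Fin n → α)} (h : powVec q n = powVec p n ∘ σ) :
    ∃ τ : Equiv.Perm α, p = q ∘ τ := by
  refine exists_perm_of_sum_pow_eq fun k => ?_
  have key : ∀ r : α → ℝ, (∑ a, r a ^ k) ^ n = ∑ x, powVec r n x ^ k := by
    intro r
    rw [← sum_powVec]
    refine Finset.sum_congr rfl fun x _ => ?_
    simp [powVec, Finset.prod_pow]
  have : (∑ a, p a ^ k) ^ n = (∑ a, q a ^ k) ^ n := by
    rw [key, key, h]
    exact (Equiv.sum_comp σ fun x => powVec p n x ^ k).symm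
  exact (pow_left_inj₀ (Finset.sum_nonneg fun a _ => pow_nonneg (hp a) k)
    (Finset.sum_nonneg fun a _ => pow_nonneg (hq a) k) hn).1 this

lemma card_powVec_ne_zero (p : α → ℝ) (n : ℕ) :
    (univ.filter fun x => powVec p n x ≠ 0).card = (univ.filter fun a => p a ≠ 0).card ^ n := by
  rw [show (univ.filter fun x => powVec p n x ≠ 0) =
    Fintype.piFinset fun _ : Fin n => univ.filter fun a => p a ≠ 0 by
      ext x; simp only [mem_filter, mem_univ, true_and, Fintype.mem_piFinset, powVec_ne_zero_iff]]
  simp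

variable [DecidableEq α]

lemma ne_zero_of_marginal_eq {q : α → ℝ} {n : ℕ} {P : (Fin n → α) → ℝ} (hP : ∀ x, 0 ≤ P x)
    (hm : ∀ k a, ∑ x with x k = a, P x = q a) {x : Fin n → α} (hx : P x ≠ 0) (k : Fin n) :
    q (x k) ≠ 0 := by
  rw [← hm k (x k)]
  refine (((hP x).lt_of_ne' hx).trans_le ?_).ne'
  exact Finset.single_le_sum (f := P) (fun y _ => hP y) (by simp)

lemma sum_mul_log_powVec {q : α → ℝ} {n : ℕ} {P : (Fin n → α) → ℝ} (hP : ∀ x, 0 ≤ P x)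
    (hm : ∀ k a, ∑ x with x k = a, P x = q a) :
    ∑ x, P x * Real.log (powVec q n x) = n * ∑ a, q a * Real.log (q a) := by
  have h1 : ∀ x, P x * Real.log (powVec q n x) = ∑ k, P x * Real.log (q (x k)) := by
    intro x
    by_cases hx : P x = 0
    · simp [hx]
    · rw [powVec, Real.log_prod fun k _ => ne_zero_of_marginal_eq hP hm hx k, Finset.mul_sum]
  have h2 : ∀ k : Fin n, ∑ x, P x * Real.log (q (x k)) = ∑ a, q a * Real.log (q a) := by
    intro k
    rw [← Finset.sum_fiberwise univ (fun x : Fin n → α => x k)]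
    refine Finset.sum_congr rfl fun a _ => ?_
    rw [← hm k a, Finset.sum_mul]
    refine Finset.sum_congr rfl fun x hx => ?_
    simp only [mem_filter, mem_univ, true_and] at hx
    rw [hx, hm k a]
  rw [Finset.sum_congr rfl fun x _ => h1 x, Finset.sum_comm, Finset.sum_congr rfl fun k _ => h2 k]
  simp

/-- A vector on `n`-tuples with all marginals `q` that is majorized by `p^{⊗n}` forces the
entropy of `q` to exceed that of `p`, and its support to be at least as large. -/
lemma entropy_lt_and_card_support_le {p q : α → ℝ} (hp : IsProbVec p) (hq : IsProbVec q)
    (hne : ¬ ∃ σ : Equiv.Perm α, p = q ∘ σ) {n : ℕ} (hn : n ≠ 0) {P : (Fin n → α) → ℝ}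
    (hP : IsProbVec P) (hm : ∀ k a, ∑ x with x k = a, P x = q a) (hmaj : PMaj P (powVec p n)) :
    (∑ a, q a * Real.log (q a) < ∑ a, p a * Real.log (p a)) ∧
      (univ.filter fun a => p a ≠ 0).card ≤ (univ.filter fun a => q a ≠ 0).card := by
  have hsupp : ∀ x, P x ≠ 0 → powVec q n x ≠ 0 := fun x hx =>
    powVec_ne_zero_iff.2 (ne_zero_of_marginal_eq hP.1 hm hx)
  have hsupp' : ∀ x, powVec q n x = 0 → P x = 0 := fun x hx => by
    by_contra h; exact hsupp x h hx
  constructor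
  · have h1 := sum_mul_log_le (hq.powVec n).1 hP.1 ((hq.powVec n).2.trans hP.2.symm) hsupp'
    obtain ⟨h2, h2'⟩ := hmaj.sum_mul_log_le hP (hp.powVec n)
    have ep := sum_mul_log_powVec (hp.powVec n).1 fun k a => powVec_marginal hp k a
    have eq := sum_mul_log_powVec hP.1 hm
    have hn' : (0 : ℝ) < n := by exact_mod_cast Nat.pos_of_ne_zero hn
    refine lt_of_le_of_ne ?_ fun heq => hne ?_
    · refine le_of_mul_le_mul_left ?_ hn'
      linarith
    · rw [heq] at eq
      have h3 := eq_of_sum_mul_log_eq (hq.powVec n).1 hP.1 ((hq.powVec n).2.trans hP.2.symm)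
        hsupp' (by linarith)
      obtain ⟨σ, hσ⟩ := h2' (by linarith)
      exact exists_perm_of_powVec_eq hp.1 hq.1 hn (h3.symm.trans hσ)
  · have h1 := hmaj.card_support_le (hp.powVec n).1
    have h2 : (univ.filter fun x => P x ≠ 0).card ≤ (univ.filter fun x => powVec q n x ≠ 0).card :=
      Finset.card_le_card (Finset.monotone_filter_right _ fun x _ => hsupp x)
    rw [card_powVec_ne_zero] at h1 h2
    exact (Nat.pow_le_pow_iff_left hn).1 (h1.trans h2)

end ProductVectors

section Typicality

open Finset Filter Topology

variable {α : Type*}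

lemma powVec_eq_exp {p : α → ℝ} (hp : ∀ a, 0 ≤ p a) {n : ℕ} {x : Fin n → α}
    (hx : powVec p n x ≠ 0) : powVec p n x = Real.exp (∑ k, Real.log (p (x k))) := by
  rw [Real.exp_sum, powVec]
  refine Finset.prod_congr rfl fun k _ => ?_
  rw [Real.exp_log ((hp _).lt_of_ne' (powVec_ne_zero_iff.1 hx k))]

lemma mul_exp_le_card_of_powVec_le {p : α → ℝ} {n : ℕ} {h m : ℝ} {S : Finset (Fin n → α)}
    (hm : m ≤ ∑ x ∈ S, powVec p n x)
    (hS : ∀ x ∈ S, powVec p n x ≤ Real.exp (-(n * h))) : m * Real.exp (n * h) ≤ S.card := by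
  have h1 : ∑ x ∈ S, powVec p n x ≤ S.card • Real.exp (-(n * h)) :=
    Finset.sum_le_card_nsmul _ _ _ hS
  rw [nsmul_eq_mul, Real.exp_neg, ← div_eq_mul_inv] at h1
  exact (le_div_iff₀ (Real.exp_pos _)).1 (hm.trans h1)

/-- The number of occurrences of the symbol `i` in a tuple. -/
def occ [DecidableEq α] {n : ℕ} (i : α) (x : Fin n → α) : ℝ := ∑ k, if x k = i then 1 else 0

lemma occ_le [DecidableEq α] {n : ℕ} (i : α) (x : Fin n → α) : occ i x ≤ n := by
  calc occ i x ≤ ∑ _k : Fin n, (1 : ℝ) := Finset.sum_le_sum fun k _ => by split_ifs <;> norm_num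
    _ = n := by simp

variable [Fintype α]

/-- Chernoff's trick: an exponential moment below one exists past the mean. -/
lemma exists_sum_mul_exp_lt_one {p : α → ℝ} (hp : IsProbVec p) {f : α → ℝ} {c : ℝ}
    (hc : ∑ a, p a * f a < c) : ∃ t > 0, ∑ a, p a * Real.exp (t * (f a - c)) < 1 := by
  have hd : HasDerivAt (fun t : ℝ => ∑ a, p a * Real.exp (t * (f a - c)))
      (∑ a, p a * (Real.exp (0 * (f a - c)) * (1 * (f a - c)))) 0 :=
    HasDerivAt.fun_sum fun a _ => (((hasDerivAt_id' (0 : ℝ)).mul_const _).exp).const_mul _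
  have hneg : ∑ a, p a * (Real.exp (0 * (f a - c)) * (1 * (f a - c))) < 0 := by
    simp only [zero_mul, Real.exp_zero, one_mul]
    simp only [mul_sub, Finset.sum_sub_distrib]
    rw [← Finset.sum_mul, hp.2]
    linarith
  have h := (hd.tendsto_slope_zero_right.eventually (gt_mem_nhds hneg)).and self_mem_nhdsWithin
  obtain ⟨t, ht, ht0⟩ := h.exists
  refine ⟨t, ht0, ?_⟩
  have ht0 : 0 < t := ht0
  simp only [zero_add, zero_mul, Real.exp_zero, mul_one, hp.2, smul_eq_mul] at ht
  have := neg_of_mul_neg_right ht (inv_pos.2 ht0).le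
  linarith

/-- Weak law of large numbers (upper deviations) for tensor powers. -/
lemma tendsto_sum_powVec_deviation {p : α → ℝ} (hp : IsProbVec p) {f : α → ℝ} {c : ℝ}
    (hc : ∑ a, p a * f a < c) :
    Tendsto (fun n : ℕ => ∑ x : Fin n → α with n * c ≤ ∑ k, f (x k), powVec p n x)
      atTop (𝓝 0) := by
  obtain ⟨t, ht, hr⟩ := exists_sum_mul_exp_lt_one hp hc
  set r := ∑ a, p a * Real.exp (t * (f a - c)) with hrdef
  have hr0 : 0 ≤ r := Finset.sum_nonneg fun a _ => mul_nonneg (hp.1 a) (Real.exp_pos _).le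
  refine squeeze_zero (fun n => Finset.sum_nonneg fun x _ => powVec_nonneg hp.1 n x) (fun n => ?_)
    (tendsto_pow_atTop_nhds_zero_of_lt_one hr0 hr)
  rw [hrdef, ← sum_powVec, Finset.sum_filter]
  refine Finset.sum_le_sum fun x _ => ?_
  have e : powVec (fun a => p a * Real.exp (t * (f a - c))) n x =
      powVec p n x * Real.exp (t * (∑ k, f (x k) - n * c)) := by
    simp only [powVec, Finset.prod_mul_distrib, ← Real.exp_sum]
    congr 2
    simp [← Finset.mul_sum, Finset.sum_sub_distrib]
  rw [e]
  have h0 := powVec_nonneg hp.1 n x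
  split_ifs with h
  · refine le_mul_of_one_le_right h0 (Real.one_le_exp ?_)
    exact mul_nonneg ht.le (sub_nonneg.2 h)
  · exact mul_nonneg h0 (Real.exp_pos _).le

lemma exists_perm_map_subset {β : Type*} [Fintype β] [DecidableEq β] {S S' T T' : Finset β}
    (hS : S ⊆ S') (hT : T ⊆ T') (h : S.card ≤ T.card) (h' : S'.card ≤ T'.card) :
    ∃ σ : Equiv.Perm β, (∀ x ∈ S, σ x ∈ T) ∧ ∀ x ∈ S', σ x ∈ T' := by
  obtain ⟨U, hUT, hU⟩ := Finset.exists_subset_card_eq h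
  obtain ⟨U', hUU', hUT', hU'⟩ := Finset.exists_subsuperset_card_eq (hUT.trans hT)
    (hU.trans_le (Finset.card_le_card hS)) h'
  let color (A A' : Finset β) (x : β) : Fin 3 := if x ∈ A then 0 else if x ∈ A' then 1 else 2
  have card_color : ∀ A A' : Finset β, A ⊆ A' → ∀ b,
      (univ.filter fun x => color A A' x = b).card =
        if b = 0 then A.card else if b = 1 then A'.card - A.card else
          Fintype.card β - A'.card := by
    intro A A' hA b
    have : univ.filter (fun x => color A A' x = b) =
        if b = 0 then A else if b = 1 then A' \ A else A'ᶜ := by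
      ext x
      have := @hA x
      fin_cases b <;> simp [color] <;> split_ifs <;> simp_all
    rw [this]
    split_ifs
    · rfl
    · exact Finset.card_sdiff_of_subset hA
    · exact Finset.card_compl A'
  obtain ⟨σ, hσ⟩ := exists_perm_of_card_fiber_eq (f := color S S') (g := color U U') fun b => by
    rw [card_color _ _ hS, card_color _ _ hUU', hU, hU']
  refine ⟨σ, fun x hx => hUT ?_, fun x hx => hUT' ?_⟩
  · have := congrFun hσ x
    simp only [color, hx, if_true, Function.comp_apply] at this
    by_contra hx'
    simp only [hx', if_false] at this
    split_ifs at this <;> simp at this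
  · have := congrFun hσ x
    simp only [color, hx, if_true, Function.comp_apply] at this
    by_contra hx'
    have hx'' : σ x ∉ U := fun h => hx' (hUU' h)
    simp only [hx', hx'', if_false] at this
    split_ifs at this <;> simp at this

lemma card_le_exp_of_le_powVec {p : α → ℝ} (hp : IsProbVec p) {n : ℕ} {h : ℝ}
    {S : Finset (Fin n → α)} (hS : ∀ x ∈ S, Real.exp (-(n * h)) ≤ powVec p n x) :
    (S.card : ℝ) ≤ Real.exp (n * h) := by
  have h1 : S.card • Real.exp (-(n * h)) ≤ ∑ x ∈ S, powVec p n x :=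
    Finset.card_nsmul_le_sum _ _ _ hS
  have h2 : ∑ x ∈ S, powVec p n x ≤ 1 := by
    rw [← (hp.powVec n).2]
    exact Finset.sum_le_sum_of_subset_of_nonneg (Finset.subset_univ _)
      fun x _ _ => powVec_nonneg hp.1 n x
  rw [nsmul_eq_mul, Real.exp_neg, ← div_eq_mul_inv] at h1
  exact (div_le_one (Real.exp_pos _)).1 (h1.trans h2)

variable [DecidableEq α]

/-- Perturbing a probability vector towards a point mass keeps it a probability vector. -/
lemma IsProbVec.mix_single {q : α → ℝ} (hq : IsProbVec q) (j : α) {η : ℝ} (h0 : 0 ≤ η)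
    (h1 : η ≤ 1) : IsProbVec fun a => (1 - η) * q a + η * if a = j then 1 else 0 := by
  refine ⟨fun a => ?_, ?_⟩
  · have := hq.1 a
    have : 0 ≤ 1 - η := by linarith
    dsimp only
    split_ifs <;> positivity
  · rw [Finset.sum_add_distrib, ← Finset.mul_sum, ← Finset.mul_sum, hq.2]
    simp

lemma exists_mix_single_entropy {q : α → ℝ} {H : ℝ} (hH : ∑ a, q a * Real.log (q a) < H) (j : α) :
    ∃ η : ℝ, 0 < η ∧ η < 1 ∧
      ∑ a, ((1 - η) * q a + η * if a = j then 1 else 0) *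
        Real.log ((1 - η) * q a + η * if a = j then 1 else 0) < H := by
  have hcont : Continuous fun η : ℝ => ∑ a, ((1 - η) * q a + η * if a = j then 1 else 0) *
        Real.log ((1 - η) * q a + η * if a = j then 1 else 0) := by
    refine continuous_finsetSum _ fun a _ => ?_
    exact Real.continuous_mul_log.comp
      (f := fun η : ℝ => (1 - η) * q a + η * if a = j then 1 else 0) (by fun_prop)
  have h := hcont.tendsto 0
  have h0 := (h.mono_left (nhdsWithin_le_nhds (s := Set.Ioi 0))).eventually_lt_const
    (u := H) (by simpa using hH)
  obtain ⟨η, h1, h2, h3⟩ := (h0.and (Ioo_mem_nhdsGT (zero_lt_one (α := ℝ)))).exists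
  exact ⟨η, h2, h3, h1⟩

/-- If `s` has larger entropy than `p`, then eventually the typical tuples of `p` are outnumbered
by the tuples in the support of `s` that rarely exceed prescribed symbol frequencies. -/
lemma eventually_card_typical_le {p s : α → ℝ} (hp : IsProbVec p) (hs : IsProbVec s)
    {h₁ h₂ : ℝ} (h12 : h₁ < h₂) (hs2 : ∑ a, s a * Real.log (s a) < -h₂)
    {J : Finset α} {c : α → ℝ} (hc : ∀ i ∈ J, s i < c i) :
    ∀ᶠ n : ℕ in atTop,
      (univ.filter fun x : Fin n → α => powVec p n x ≠ 0 ∧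
        ¬ n * h₁ ≤ ∑ k, -Real.log (p (x k))).card ≤
      (univ.filter fun y : Fin n → α => powVec s n y ≠ 0 ∧
        ∀ i ∈ J, ¬ n * c i ≤ occ i y).card := by
  have hlim1 := tendsto_sum_powVec_deviation hs hs2
  have hlim2 : ∀ i ∈ J, Tendsto
      (fun n : ℕ => ∑ y : Fin n → α with n * c i ≤ occ i y, powVec s n y) atTop (𝓝 0) :=
    fun i hi => tendsto_sum_powVec_deviation hs (f := fun a => if a = i then 1 else 0)
      (by simpa using hc i hi)
  have hlim := hlim1.add (tendsto_finsetSum J hlim2)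
  simp only [Finset.sum_const_zero, add_zero] at hlim
  have hexp : Tendsto (fun n : ℕ => Real.exp (n * (h₂ - h₁))) atTop atTop :=
    Real.tendsto_exp_atTop.comp
      (tendsto_natCast_atTop_atTop.atTop_mul_const (sub_pos.2 h12))
  filter_upwards [hlim.eventually (gt_mem_nhds (show (0 : ℝ) < 1 / 2 by norm_num)),
    hexp.eventually_ge_atTop 2] with n hn hn2
  set Tp := univ.filter fun x : Fin n → α => powVec p n x ≠ 0 ∧
        ¬ n * h₁ ≤ ∑ k, -Real.log (p (x k)) with hTp
  set Ts := univ.filter fun y : Fin n → α =>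
    powVec s n y ≠ 0 ∧ ¬ n * -h₂ ≤ ∑ k, Real.log (s (y k)) ∧
        ∀ i ∈ J, ¬ n * c i ≤ occ i y with hTs
  have hcard1 : (Tp.card : ℝ) ≤ Real.exp (n * h₁) := by
    refine card_le_exp_of_le_powVec hp fun x hx => ?_
    simp only [hTp, mem_filter, mem_univ, true_and, not_le, Finset.sum_neg_distrib] at hx
    rw [powVec_eq_exp hp.1 hx.1]
    exact Real.exp_le_exp.2 (by linarith [hx.2])
  have hmass : (1 / 2 : ℝ) ≤ ∑ y ∈ Ts, powVec s n y := by
    have h1 : (1 : ℝ) ≤ ∑ y ∈ Ts, powVec s n y +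
        (∑ y : Fin n → α with n * -h₂ ≤ ∑ k, Real.log (s (y k)), powVec s n y +
          ∑ i ∈ J, ∑ y : Fin n → α with n * c i ≤ occ i y, powVec s n y) := by
      rw [← (hs.powVec n).2, hTs]
      simp only [Finset.sum_filter]
      rw [Finset.sum_comm (s := J), ← Finset.sum_add_distrib, ← Finset.sum_add_distrib]
      refine Finset.sum_le_sum fun y _ => ?_
      have h0 := powVec_nonneg hs.1 n y
      have hJ0 : 0 ≤ ∑ i ∈ J, if n * c i ≤ occ i y then powVec s n y else 0 :=
        Finset.sum_nonneg fun i _ => by split_ifs <;> simp [h0]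
      by_cases hy0 : powVec s n y = 0
      · simp [hy0]
      by_cases hy1 : n * -h₂ ≤ ∑ k, Real.log (s (y k))
      · rw [if_pos hy1]
        have : 0 ≤ if powVec s n y ≠ 0 ∧ ¬ n * -h₂ ≤ ∑ k, Real.log (s (y k)) ∧
          ∀ i ∈ J, ¬ n * c i ≤ occ i y then powVec s n y else 0 := by split_ifs <;> simp [h0]
        linarith
      by_cases hy2 : ∀ i ∈ J, ¬ n * c i ≤ occ i y
      · rw [if_pos ⟨hy0, hy1, hy2⟩, if_neg hy1]
        linarith
      · push Not at hy2
        obtain ⟨i, hi, hi'⟩ := hy2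
        have h3 : powVec s n y ≤ ∑ i ∈ J, if n * c i ≤ occ i y then powVec s n y else 0 := by
          refine le_trans ?_ (Finset.single_le_sum (fun i _ => ?_) hi)
          · rw [if_pos hi']
          · split_ifs <;> simp [h0]
        rw [if_neg hy1]
        split_ifs <;> linarith
    linarith
  have hcard2 : 1 / 2 * Real.exp (n * h₂) ≤ Ts.card := by
    refine mul_exp_le_card_of_powVec_le hmass fun y hy => ?_
    simp only [hTs, mem_filter, mem_univ, true_and, not_le] at hy
    rw [powVec_eq_exp hs.1 hy.1]
    exact Real.exp_le_exp.2 (by linarith [hy.2.1])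
  have hfin : (Tp.card : ℝ) ≤ Ts.card := by
    refine hcard1.trans (le_trans ?_ hcard2)
    have : Real.exp (n * h₂) = Real.exp (n * h₁) * Real.exp (n * (h₂ - h₁)) := by
      rw [← Real.exp_add]; ring_nf
    rw [this]
    nlinarith [Real.exp_pos (n * h₁)]
  have hsub : Ts ⊆ univ.filter fun y : Fin n → α => powVec s n y ≠ 0 ∧
        ∀ i ∈ J, ¬ n * c i ≤ occ i y :=
    Finset.monotone_filter_right _ fun y _ hy => ⟨hy.1, hy.2.2⟩
  exact (Nat.cast_le.1 hfin).trans (Finset.card_le_card hsub)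

/-- Some rearrangement of `p^{⊗n}` has average symbol frequencies at most `q`, except possibly at
one prescribed symbol `j`. -/
lemma eventually_exists_perm_occ_le {p q : α → ℝ} (hp : IsProbVec p) (hq : IsProbVec q)
    (hH : ∑ a, q a * Real.log (q a) < ∑ a, p a * Real.log (p a))
    (hcard : (univ.filter fun a => p a ≠ 0).card ≤ (univ.filter fun a => q a ≠ 0).card)
    {j : α} (hj : q j ≠ 0) :
    ∀ᶠ n : ℕ in atTop, ∃ σ : Equiv.Perm (Fin n → α), ∀ i ≠ j,
      ∑ x, powVec p n x * occ i (σ x) ≤ n * q i := by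
  obtain ⟨η, hη0, hη1, hη⟩ := exists_mix_single_entropy hH j
  set s : α → ℝ := fun a => (1 - η) * q a + η * if a = j then 1 else 0 with hsdef
  have hs : IsProbVec s := hq.mix_single j hη0.le hη1.le
  have hsq : ∀ a, s a ≠ 0 → q a ≠ 0 := by
    intro a ha h
    by_cases haj : a = j
    · exact hj (haj ▸ h)
    · simp [hsdef, h, haj] at ha
  obtain ⟨m₂, hm2, hm2'⟩ := exists_between hη
  obtain ⟨m₁, hm1, hm1'⟩ := exists_between hm2'
  set J : Finset α := univ.filter fun i => i ≠ j ∧ q i ≠ 0 with hJ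
  set c : α → ℝ := fun i => (1 - η / 2) * q i with hcdef
  have hqpos : ∀ i ∈ J, 0 < q i := fun i hi => by
    simp only [hJ, mem_filter, mem_univ, true_and] at hi
    exact (hq.1 i).lt_of_ne' hi.2
  have hc : ∀ i ∈ J, s i < c i := fun i hi => by
    have h1 := hqpos i hi
    simp only [hJ, mem_filter, mem_univ, true_and] at hi
    simp only [hsdef, hcdef, hi.1, if_false]
    nlinarith
  have hdev := tendsto_sum_powVec_deviation hp (f := fun a => -Real.log (p a)) (c := -m₁)
    (by simpa using hm1')
  have hdev' : ∀ᶠ n : ℕ in atTop, ∀ i ∈ J,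
      ∑ x : Fin n → α with n * -m₁ ≤ ∑ k, -Real.log (p (x k)), powVec p n x < η / 2 * q i := by
    rw [Filter.eventually_all_finset]
    intro i hi
    exact hdev.eventually (gt_mem_nhds (by have := hqpos i hi; positivity))
  filter_upwards [eventually_card_typical_le hp hs (h₁ := -m₁) (h₂ := -m₂) (by linarith)
    (by rwa [neg_neg]) hc, hdev'] with n hn hn'
  obtain ⟨σ, hσ1, hσ2⟩ := exists_perm_map_subset
    (S' := univ.filter fun x => powVec p n x ≠ 0) (T' := univ.filter fun x => powVec q n x ≠ 0)
    (Finset.monotone_filter_right _ fun x _ hx => hx.1)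
    (Finset.monotone_filter_right _ fun y _ hy => powVec_ne_zero_iff.2 fun k =>
      hsq _ (powVec_ne_zero_iff.1 hy.1 k)) hn
    (by rw [card_powVec_ne_zero, card_powVec_ne_zero]; exact Nat.pow_le_pow_left hcard n)
  refine ⟨σ, fun i hi => ?_⟩
  by_cases hqi : q i = 0
  · rw [hqi, mul_zero]
    refine (Finset.sum_eq_zero fun x _ => ?_).le
    by_cases hx : powVec p n x = 0
    · simp [hx]
    · have h1 := hσ2 x (by simp [hx])
      simp only [mem_filter, mem_univ, true_and, powVec_ne_zero_iff] at h1
      rw [occ, Finset.sum_eq_zero, mul_zero]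
      intro k _
      rw [if_neg]
      exact fun h => h1 k (h ▸ hqi)
  · have hiJ : i ∈ J := by simp [hJ, hi, hqi]
    have hci : 0 ≤ c i := by
      have := hqpos i hiJ
      have : 0 ≤ 1 - η / 2 := by linarith
      positivity
    calc ∑ x, powVec p n x * occ i (σ x)
        ≤ ∑ x, (powVec p n x * (n * c i) +
            if n * -m₁ ≤ ∑ k, -Real.log (p (x k)) then powVec p n x * n else 0) := by
          refine Finset.sum_le_sum fun x _ => ?_
          have h0 := powVec_nonneg hp.1 n x
          split_ifs with hx
          · have := mul_le_mul_of_nonneg_left (occ_le i (σ x)) h0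
            have : 0 ≤ powVec p n x * (n * c i) := by positivity
            linarith
          · by_cases hx0 : powVec p n x = 0
            · simp [hx0]
            · have h1 := hσ1 x (mem_filter.2 ⟨mem_univ _, hx0, hx⟩)
              have h2 := (mem_filter.1 h1).2.2 i hiJ
              rw [add_zero]
              exact mul_le_mul_of_nonneg_left (not_le.1 h2).le h0
      _ = n * c i + n * ∑ x : Fin n → α with n * -m₁ ≤ ∑ k, -Real.log (p (x k)),
            powVec p n x := by
          rw [Finset.sum_add_distrib, ← Finset.sum_mul, (hp.powVec n).2, ← Finset.sum_filter,
            ← Finset.sum_mul, one_mul, mul_comm (∑ x ∈ _, _)]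
      _ ≤ n * c i + n * (η / 2 * q i) := by
          gcongr
          exact (hn' i hiJ).le
      _ = n * q i := by simp only [hcdef]; ring

end Typicality

section Construction

open Finset Filter Topology

variable {α : Type*} [Fintype α] [DecidableEq α]

/-- A probability vector `q` lies in the convex hull of vectors `a j` of the same total mass, one
for each `j` in the support of `q`, where `a j` exceeds `q` only in the coordinate `j`. -/
lemma mem_convexHull_of_forall_le {q : α → ℝ} (hq : IsProbVec q) {a : α → α → ℝ}
    (ha0 : ∀ j, q j ≠ 0 → ∀ i, 0 ≤ a j i) (ha1 : ∀ j, q j ≠ 0 → ∑ i, a j i = 1)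
    (ha : ∀ j, q j ≠ 0 → ∀ i ≠ j, a j i ≤ q i) :
    q ∈ convexHull ℝ (a '' {j | q j ≠ 0}) := by
  by_contra hmem
  obtain ⟨f, u, hu, hf⟩ := geometric_hahn_banach_point_closed (convex_convexHull ℝ _)
    ((Set.toFinite (a '' {j | q j ≠ 0})).isClosed_convexHull ℝ) hmem
  have hne : (univ.filter fun j => q j ≠ 0).Nonempty := by
    by_contra h
    rw [Finset.not_nonempty_iff_eq_empty, Finset.filter_eq_empty_iff] at h
    have h0 : ∑ i, q i = 0 := Finset.sum_eq_zero fun i hi => by simpa using h hi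
    rw [hq.2] at h0
    exact one_ne_zero h0
  set w : α → ℝ := fun i => f fun l => if i = l then 1 else 0 with hw
  have hfw : ∀ x : α → ℝ, f x = ∑ i, x i * w i := fun x =>
    LinearMap.pi_apply_eq_sum_univ (f : (α → ℝ) →ₗ[ℝ] ℝ) x
  obtain ⟨j, hj, hmin⟩ := Finset.exists_min_image _ w hne
  have hj : q j ≠ 0 := by simpa using hj
  have h1 := hf (a j) (subset_convexHull ℝ _ ⟨j, hj, rfl⟩)
  have h2 : ∑ i, (w i - w j) * (a j i - q i) ≤ 0 := by
    refine Finset.sum_nonpos fun i _ => ?_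
    by_cases hij : i = j
    · simp [hij]
    by_cases hqi : q i = 0
    · have h3 := ha j hj i hij
      have h4 := ha0 j hj i
      rw [show a j i - q i = 0 by linarith, mul_zero]
    · exact mul_nonpos_of_nonneg_of_nonpos (sub_nonneg.2 (hmin i (by simp [hqi])))
        (sub_nonpos.2 (ha j hj i hij))
  have h3 : ∑ i, (w i - w j) * (a j i - q i) = f (a j) - f q := by
    have : ∀ i, (w i - w j) * (a j i - q i) = a j i * w i - q i * w i - w j * a j i + w j * q i :=
      fun i => by ring
    simp only [this, Finset.sum_add_distrib, Finset.sum_sub_distrib, ← Finset.mul_sum]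
    rw [hfw, hfw, ha1 j hj, hq.2]
    ring
  linarith

lemma sum_occ {n : ℕ} (x : Fin n → α) : ∑ i, occ i x = n := by
  simp only [occ]
  rw [Finset.sum_comm]
  simp

lemma sum_mul_occ {n : ℕ} (P : (Fin n → α) → ℝ) (a : α) :
    ∑ x, P x * occ a x = ∑ k, ∑ x with x k = a, P x := by
  simp only [occ, Finset.mul_sum, mul_ite, mul_one, mul_zero, Finset.sum_filter]
  rw [Finset.sum_comm]

/-- Averaging over cyclic shifts of the tuple makes all marginals equal to the average one. -/
lemma sum_filter_cyclic_average {n : ℕ} [NeZero n] (P : (Fin n → α) → ℝ) (k : Fin n) (a : α) :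
    ∑ x with x k = a,
      ∑ c : Fin n, (n : ℝ)⁻¹ * P ((Equiv.addRight c).arrowCongr (Equiv.refl α) x) =
      (n : ℝ)⁻¹ * ∑ x, P x * occ a x := by
  rw [sum_mul_occ, Finset.sum_comm, ← Equiv.sum_comp (Equiv.addLeft k)
    fun l => ∑ x with x l = a, P x, Finset.mul_sum]
  refine Finset.sum_congr rfl fun c _ => ?_
  rw [← Finset.mul_sum, Finset.sum_filter, Finset.sum_filter]
  congr 1
  rw [← Equiv.sum_comp ((Equiv.addRight c).arrowCongr (Equiv.refl α))
    fun x => if x (Equiv.addLeft k c) = a then P x else 0]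
  refine Finset.sum_congr rfl fun x _ => ?_
  simp [Equiv.arrowCongr]

/-- If `q` has larger entropy than `p` and at least as large support, then for some `n` there is a
probability vector on `n`-tuples majorized by `p^{⊗n}` all of whose marginals are `q`. -/
lemma exists_pMaj_powVec_marginal_eq {p q : α → ℝ} (hp : IsProbVec p) (hq : IsProbVec q)
    (hH : ∑ a, q a * Real.log (q a) < ∑ a, p a * Real.log (p a))
    (hcard : (univ.filter fun a => p a ≠ 0).card ≤ (univ.filter fun a => q a ≠ 0).card) :
    ∃ n : ℕ, 1 ≤ n ∧ ∃ P : (Fin n → α) → ℝ, IsProbVec P ∧ PMaj P (powVec p n) ∧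
      ∀ k a, ∑ x with x k = a, P x = q a := by
  have hev : ∀ᶠ n : ℕ in atTop, ∀ j : α, ∃ σ : Equiv.Perm (Fin n → α), q j ≠ 0 → ∀ i ≠ j,
      ∑ x, powVec p n x * occ i (σ x) ≤ n * q i := by
    rw [Filter.eventually_all]
    intro j
    by_cases hj : q j = 0
    · exact Filter.Eventually.of_forall fun n => ⟨Equiv.refl _, fun h => absurd hj h⟩
    · filter_upwards [eventually_exists_perm_occ_le hp hq hH hcard hj] with n ⟨σ, hσ⟩
      exact ⟨σ, fun _ => hσ⟩
  obtain ⟨n, hn, hn1⟩ := (hev.and (eventually_ge_atTop 1)).exists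
  choose σ hσ using hn
  have : NeZero n := ⟨by omega⟩
  have hn0 : (0 : ℝ) < n := by exact_mod_cast hn1
  let L : ((Fin n → α) → ℝ) →ₗ[ℝ] (α → ℝ) :=
    { toFun := fun P i => (n : ℝ)⁻¹ * ∑ x, P x * occ i x
      map_add' := fun P Q => by
        ext i; simp [add_mul, Finset.sum_add_distrib, mul_add]
      map_smul' := fun r P => by
        ext i
        simp only [Pi.smul_apply, smul_eq_mul, RingHom.id_apply, mul_assoc, ← Finset.mul_sum]
        ring }
  let R : α → (Fin n → α) → ℝ := fun j => powVec p n ∘ (σ j).symm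
  have hL : ∀ j i, L (R j) i = (n : ℝ)⁻¹ * ∑ x, powVec p n x * occ i (σ j x) := by
    intro j i
    change (n : ℝ)⁻¹ * ∑ x, powVec p n ((σ j).symm x) * occ i x = _
    rw [← Equiv.sum_comp (σ j)]
    simp
  have hocc : ∀ (i : α) (x : Fin n → α), 0 ≤ occ i x := fun i x =>
    Finset.sum_nonneg fun k _ => by split_ifs <;> norm_num
  have hmem : q ∈ convexHull ℝ ((fun j => L (R j)) '' {j | q j ≠ 0}) := by
    refine mem_convexHull_of_forall_le hq (fun j _ i => ?_) (fun j _ => ?_) fun j hj i hi => ?_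
    · rw [hL]
      exact mul_nonneg (inv_nonneg.2 hn0.le)
        (Finset.sum_nonneg fun x _ => mul_nonneg (powVec_nonneg hp.1 n x) (hocc _ _))
    · simp only [hL]
      rw [← Finset.mul_sum, Finset.sum_comm]
      simp only [← Finset.mul_sum, sum_occ]
      rw [← Finset.sum_mul, (hp.powVec n).2, one_mul, inv_mul_cancel₀ hn0.ne']
    · rw [hL, inv_mul_le_iff₀ hn0]
      exact hσ j hj i hi
  rw [← Set.image_image L R, ← LinearMap.image_convexHull] at hmem
  obtain ⟨Q, hQ, hQq⟩ := hmem
  let K : Set ((Fin n → α) → ℝ) := {x | PMaj x (powVec p n)} ∩ Set.Ici 0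
  have hK : Convex ℝ K := (convex_setOf_pMaj _).inter (convex_Ici 0)
  have hcomp : ∀ x ∈ K, ∀ τ : Equiv.Perm (Fin n → α), x ∘ τ ∈ K := fun x hx τ =>
    ⟨hx.1.comp_equiv τ (Equiv.refl _), fun y => hx.2 (τ y)⟩
  have hpK : powVec p n ∈ K := ⟨⟨fun _ => le_rfl, rfl⟩, powVec_nonneg hp.1 n⟩
  have hQK : Q ∈ K := by
    refine convexHull_min ?_ hK hQ
    rintro _ ⟨j, -, rfl⟩
    exact hcomp _ hpK _
  have hPK := hK.sum_mem (t := univ) (w := fun _ : Fin n => (n : ℝ)⁻¹)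
    (fun _ _ => inv_nonneg.2 hn0.le) (by simp [hn0.ne'])
    fun c _ => hcomp Q hQK ((Equiv.addRight c).arrowCongr (Equiv.refl α))
  refine ⟨n, hn1, _, ⟨hPK.2, hPK.1.2.trans (hp.powVec n).2⟩, hPK.1, fun k a => ?_⟩
  rw [← hQq]
  simp only [Finset.sum_apply, Pi.smul_apply, Function.comp_apply, smul_eq_mul]
  exact sum_filter_cyclic_average Q k a

end Construction

section Quantum

open Finset Matrix

variable {d : ℕ}

lemma mpow_mul (A B : Matrix (Fin d) (Fin d) ℂ) (n : ℕ) :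
    mpow (A * B) n = mpow A n * mpow B n := by
  ext f g
  simp only [mpow, Matrix.of_apply, Matrix.mul_apply]
  rw [← sum_prod_eq_prod_sum fun k c => A (f k) c * B c (g k)]
  simp only [Finset.prod_mul_distrib]

lemma mpow_diagonal (p : Fin d → ℝ) (n : ℕ) :
    mpow (diagonal fun a => (p a : ℂ)) n = diagonal fun x => (powVec p n x : ℂ) := by
  ext f g
  simp only [mpow, Matrix.of_apply]
  by_cases h : f = g
  · subst h; simp [powVec]
  · rw [Matrix.diagonal_apply_ne _ h]
    obtain ⟨k, hk⟩ := Function.ne_iff.1 h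
    exact Finset.prod_eq_zero (mem_univ k) (Matrix.diagonal_apply_ne _ hk)

lemma mpow_one (n : ℕ) : mpow (1 : Matrix (Fin d) (Fin d) ℂ) n = 1 := by
  have := mpow_diagonal (fun _ : Fin d => 1) n
  simpa [powVec] using this

lemma mpow_conjTranspose (A : Matrix (Fin d) (Fin d) ℂ) (n : ℕ) :
    mpow Aᴴ n = (mpow A n)ᴴ := by
  ext f g
  simp [mpow, Matrix.conjTranspose_apply]

lemma sum_ite_eq_off {β R : Type*} [Fintype β] [DecidableEq β] [AddCommMonoid R] {n : ℕ}
    (i : Fin n) (h : Fin n → β) (F : (Fin n → β) → R) :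
    (∑ h' : Fin n → β, if ∀ k, k ≠ i → h' k = h k then F h' else 0) =
      ∑ c, F (Function.update h i c) := by
  rw [← Finset.sum_filter, ← Finset.sum_image (s := univ) (g := Function.update h i)
    fun c _ c' _ hc => Function.update_injective h i hc]
  refine Finset.sum_congr ?_ fun _ _ => rfl
  ext h'
  simp only [mem_filter, mem_univ, true_and, mem_image]
  constructor
  · intro hh
    refine ⟨h' i, ?_⟩
    ext k
    by_cases hk : k = i
    · subst hk; simp
    · simp [hk, hh k hk]
  · rintro ⟨c, rfl⟩ k hk
    simp [hk]

/-- The partial trace over all but one factor is equivariant under local unitaries. -/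
lemma ptrExcept_mpow_conj {V : Matrix (Fin d) (Fin d) ℂ} (hV : Vᴴ * V = 1) {n : ℕ} (i : Fin n)
    (M : Matrix (Fin n → Fin d) (Fin n → Fin d) ℂ) :
    ptrExcept i (mpow V n * M * mpow Vᴴ n) = V * ptrExcept i M * Vᴴ := by
  have hT : ∀ (a b : Fin d) (h h' : Fin n → Fin d),
      ∑ g with g i = a, mpow V n g h * mpow Vᴴ n h' (Function.update g i b) =
        if ∀ k, k ≠ i → h' k = h k then V a (h i) * Vᴴ (h' i) b else 0 := by
    intro a b h h'
    have key := sum_prod_eq_prod_sum (n := n) fun k c =>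
      if k = i then (if c = a then V a (h i) * Vᴴ (h' i) b else 0) else V c (h k) * Vᴴ (h' k) c
    have hoff : ∀ k, k ≠ i → (∑ c, if k = i then (if c = a then V a (h i) * Vᴴ (h' i) b else 0)
        else V c (h k) * Vᴴ (h' k) c) = if h' k = h k then 1 else 0 := by
      intro k hk
      simp only [hk, if_false]
      have := congrFun (congrFun hV (h' k)) (h k)
      rw [Matrix.mul_apply, Matrix.one_apply] at this
      rw [← this]
      exact Finset.sum_congr rfl fun c _ => mul_comm _ _
    have hrhs : (∏ k, ∑ c, if k = i then (if c = a then V a (h i) * Vᴴ (h' i) b else 0)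
        else V c (h k) * Vᴴ (h' k) c) =
        if ∀ k, k ≠ i → h' k = h k then V a (h i) * Vᴴ (h' i) b else 0 := by
      rw [← Finset.mul_prod_erase _ _ (mem_univ i),
        Finset.prod_congr rfl fun k hk => hoff k (Finset.ne_of_mem_erase hk)]
      simp only [if_true, Finset.sum_ite_eq', mem_univ]
      split_ifs with hh
      · rw [Finset.prod_eq_one, mul_one]
        intro k hk
        rw [if_pos (hh k (Finset.ne_of_mem_erase hk))]
      · push Not at hh
        obtain ⟨k, hk, hk'⟩ := hh
        rw [Finset.prod_eq_zero (Finset.mem_erase.2 ⟨hk, mem_univ k⟩) (if_neg hk'), mul_zero]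
    rw [← hrhs, ← key, Finset.sum_filter]
    refine Finset.sum_congr rfl fun g _ => ?_
    split_ifs with hg
    · simp only [mpow, Matrix.of_apply]
      rw [← Finset.prod_mul_distrib]
      refine Finset.prod_congr rfl fun k _ => ?_
      by_cases hk : k = i
      · subst hk; simp [hg]
      · simp [hk]
    · exact (Finset.prod_eq_zero (mem_univ i) (by simp [hg])).symm
  ext a b
  calc ptrExcept i (mpow V n * M * mpow Vᴴ n) a b
      = ∑ g with g i = a, ∑ h', (∑ h, mpow V n g h * M h h') *
          mpow Vᴴ n h' (Function.update g i b) := by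
        simp only [ptrExcept, Matrix.of_apply, Matrix.mul_apply]
    _ = ∑ h, ∑ h', M h h' *
          ∑ g with g i = a, mpow V n g h * mpow Vᴴ n h' (Function.update g i b) := by
        simp only [Finset.sum_mul, Finset.mul_sum]
        rw [Finset.sum_comm]
        rw [Finset.sum_comm (s := univ (α := Fin n → Fin d)) (t := univ)]
        refine Finset.sum_congr rfl fun h' _ => ?_
        rw [Finset.sum_comm]
        refine Finset.sum_congr rfl fun h _ => Finset.sum_congr rfl fun g _ => ?_
        ring
    _ = ∑ h, ∑ c, M h (Function.update h i c) * (V a (h i) * Vᴴ c b) := by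
        refine Finset.sum_congr rfl fun h _ => ?_
        simp only [hT, mul_ite, mul_zero]
        rw [sum_ite_eq_off i h fun h' => M h h' * (V a (h i) * Vᴴ (h' i) b)]
        simp
    _ = (V * ptrExcept i M * Vᴴ) a b := by
        simp only [ptrExcept, Matrix.of_apply, Matrix.mul_apply]
        rw [Finset.sum_comm]
        refine Finset.sum_congr rfl fun c _ => ?_
        rw [Finset.sum_mul, ← Finset.sum_fiberwise univ fun h : Fin n → Fin d => h i]
        refine Finset.sum_congr rfl fun e _ => ?_
        rw [Finset.mul_sum, Finset.sum_mul]
        refine Finset.sum_congr rfl fun h hh => ?_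
        simp only [mem_filter, mem_univ, true_and] at hh
        rw [hh]
        ring

lemma ptrExcept_apply_self {n : ℕ} (i : Fin n) (M : Matrix (Fin n → Fin d) (Fin n → Fin d) ℂ)
    (a : Fin d) : ptrExcept i M a a = ∑ x with x i = a, M x x := by
  simp only [ptrExcept, Matrix.of_apply]
  refine Finset.sum_congr rfl fun x hx => ?_
  simp only [mem_filter, mem_univ, true_and] at hx
  rw [← hx, Function.update_eq_self]

lemma ptrExcept_diagonal {n : ℕ} (i : Fin n) (P : (Fin n → Fin d) → ℝ) :
    ptrExcept i (diagonal fun x => (P x : ℂ)) =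
      diagonal fun a => ((∑ x with x i = a, P x : ℝ) : ℂ) := by
  ext a b
  by_cases hab : a = b
  · subst hab
    simp [ptrExcept_apply_self]
  · rw [Matrix.diagonal_apply_ne _ hab]
    simp only [ptrExcept, Matrix.of_apply]
    refine Finset.sum_eq_zero fun x hx => Matrix.diagonal_apply_ne _ fun h => hab ?_
    simp only [mem_filter, mem_univ, true_and] at hx
    rw [← hx, h]
    simp

section Spectrum

variable {ι : Type*} [Fintype ι] [DecidableEq ι]

lemma Matrix.IsHermitian.exists_eigenvalues_eq_comp {A : Matrix ι ι ℂ} (hA : A.IsHermitian)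
    {W : Matrix ι ι ℂ} (hW : Wᴴ * W = 1) {x : ι → ℝ}
    (h : A = W * (diagonal fun i => (x i : ℂ)) * Wᴴ) :
    ∃ σ : Equiv.Perm ι, hA.eigenvalues = x ∘ σ := by
  have hroots : A.charpoly.roots = Multiset.map (fun i => (x i : ℂ)) univ.val := by
    rw [h, Matrix.charpoly_mul_comm, ← Matrix.mul_assoc, hW, Matrix.one_mul,
      Matrix.charpoly_diagonal, Polynomial.roots_prod]
    · simp
    · simp [Finset.prod_ne_zero_iff, Polynomial.X_sub_C_ne_zero]
  rw [hA.roots_charpoly_eq_eigenvalues] at hroots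
  refine exists_perm_of_card_fiber_eq fun b => ?_
  have hc := congrArg (Multiset.count (b : ℂ)) hroots
  rw [Multiset.count_map, Multiset.count_map] at hc
  simpa [Finset.card, Finset.filter_val, eq_comm] using hc

lemma Matrix.IsHermitian.eq_conj_diagonal {A : Matrix ι ι ℂ} (hA : A.IsHermitian) :
    ∃ U : Matrix ι ι ℂ, Uᴴ * U = 1 ∧ U * Uᴴ = 1 ∧
      A = U * (diagonal fun i => (hA.eigenvalues i : ℂ)) * Uᴴ := by
  refine ⟨hA.eigenvectorUnitary, Unitary.coe_star_mul_self _, Unitary.coe_mul_star_self _, ?_⟩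
  conv_lhs => rw [hA.spectral_theorem]
  rfl

lemma Matrix.PosSemidef.isProbVec_eigenvalues {A : Matrix ι ι ℂ} (hA : A.PosSemidef)
    (ht : A.trace = 1) : IsProbVec hA.isHermitian.eigenvalues := by
  refine ⟨hA.eigenvalues_nonneg, ?_⟩
  have h := congrArg Complex.re hA.isHermitian.trace_eq_sum_eigenvalues
  rw [ht] at h
  simpa using h.symm

lemma normSq_mem_doublyStochastic {W : Matrix ι ι ℂ} (hW : Wᴴ * W = 1) (hW' : W * Wᴴ = 1) :
    (Matrix.of fun i j => Complex.normSq (W i j)) ∈ doublyStochastic ℝ ι := by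
  rw [mem_doublyStochastic_iff_sum]
  refine ⟨fun i j => Complex.normSq_nonneg _, fun i => ?_, fun j => ?_⟩
  · have := congrFun (congrFun hW' i) i
    rw [Matrix.mul_apply, Matrix.one_apply_eq] at this
    simp only [Matrix.conjTranspose_apply, Complex.star_def, Complex.mul_conj] at this
    exact_mod_cast this
  · have := congrFun (congrFun hW j) j
    rw [Matrix.mul_apply, Matrix.one_apply_eq] at this
    simp only [Matrix.conjTranspose_apply, Complex.star_def, mul_comm _ (W _ j),
      Complex.mul_conj] at this
    exact_mod_cast this

/-- Schur's theorem: the diagonal of `W * diagonal y * Wᴴ` with `W` unitary is majorized by `y`. -/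
lemma pMaj_re_diag_conj {W : Matrix ι ι ℂ} (hW : Wᴴ * W = 1) (hW' : W * Wᴴ = 1) (y : ι → ℝ) :
    PMaj (fun i => ((W * (diagonal fun i => (y i : ℂ)) * Wᴴ) i i).re) y := by
  convert! pMaj_mulVec_of_mem_doublyStochastic (normSq_mem_doublyStochastic hW hW') y using 1
  ext i
  rw [Matrix.mul_apply, Complex.re_sum]
  simp only [Matrix.mulVec, dotProduct, Matrix.of_apply, Matrix.mul_diagonal,
    Matrix.conjTranspose_apply, Complex.star_def]
  refine Finset.sum_congr rfl fun j _ => ?_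
  rw [mul_right_comm, Complex.mul_conj, ← Complex.ofReal_mul, Complex.ofReal_re]

end Spectrum

lemma exists_eigenvalues_mpow_eq {ρ : Matrix (Fin d) (Fin d) ℂ} (hρ : ρ.IsHermitian) {n : ℕ}
    (hmp : (mpow ρ n).IsHermitian) :
    ∃ σ : Equiv.Perm (Fin n → Fin d), hmp.eigenvalues = powVec hρ.eigenvalues n ∘ σ := by
  obtain ⟨U, hU, -, h⟩ := hρ.eq_conj_diagonal
  refine hmp.exists_eigenvalues_eq_comp (W := mpow U n) ?_ ?_
  · rw [← mpow_conjTranspose, ← mpow_mul, hU, mpow_one]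
  · conv_lhs => rw [h]
    rw [mpow_mul, mpow_mul, mpow_diagonal, mpow_conjTranspose]

end Quantum

/-- Wilming's theorem (catalytic entropy conjecture of Boes, Ng and Wilming): for density
matrices `ρ, ρ'` that are not unitarily equivalent, strict increase of von Neumann
entropy together with non-decreasing rank is equivalent to the existence of an `n`-copy
state majorized by `ρ^{⊗n}` all of whose single-site marginals equal `ρ'`. -/
theorem wilming_catalytic_entropy {d : ℕ} (ρ ρ' : Matrix (Fin d) (Fin d) ℂ)
    (hρ : ρ.PosSemidef) (hρ' : ρ'.PosSemidef)
    (hρt : ρ.trace = 1) (hρ't : ρ'.trace = 1)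
    (hne : ¬ ∃ σ : Equiv.Perm (Fin d),
        hρ.isHermitian.eigenvalues = hρ'.isHermitian.eigenvalues ∘ σ) :
    ((- ∑ i, hρ.isHermitian.eigenvalues i * Real.log (hρ.isHermitian.eigenvalues i)) <
        (- ∑ i, hρ'.isHermitian.eigenvalues i * Real.log (hρ'.isHermitian.eigenvalues i)) ∧
      ρ.rank ≤ ρ'.rank) ↔
    ∃ n : ℕ, 1 ≤ n ∧ ∃ (ρn : Matrix (Fin n → Fin d) (Fin n → Fin d) ℂ)
      (hρn : ρn.PosSemidef),
      ρn.trace = 1 ∧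
      (∃ hmp : (mpow ρ n).IsHermitian,
        PMaj hρn.isHermitian.eigenvalues hmp.eigenvalues) ∧
      (∀ i : Fin n, ptrExcept i ρn = ρ') := by
  have hp := Matrix.PosSemidef.isProbVec_eigenvalues hρ hρt
  have hq := Matrix.PosSemidef.isProbVec_eigenvalues hρ' hρ't
  obtain ⟨U, hU, hU', hdiag⟩ := hρ'.isHermitian.eq_conj_diagonal
  rw [hρ.isHermitian.rank_eq_card_non_zero_eigs, hρ'.isHermitian.rank_eq_card_non_zero_eigs,
    Fintype.card_subtype, Fintype.card_subtype, neg_lt_neg_iff]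
  constructor
  · rintro ⟨hH, hcard⟩
    obtain ⟨n, hn, P, hP, hmaj, hmarg⟩ := exists_pMaj_powVec_marginal_eq hp hq hH hcard
    have hW : (mpow U n).conjTranspose * mpow U n = 1 := by
      rw [← mpow_conjTranspose, ← mpow_mul, hU, mpow_one]
    have hD : (Matrix.diagonal fun x => (P x : ℂ)).PosSemidef :=
      Matrix.PosSemidef.diagonal fun x => by
        simpa using hP.1 x
    have hρn := hD.mul_mul_conjTranspose_same (mpow U n)
    have hmp : (mpow ρ n).IsHermitian := by
      rw [Matrix.IsHermitian, ← mpow_conjTranspose, hρ.isHermitian.eq]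
    refine ⟨n, hn, _, hρn, ?_, ⟨hmp, ?_⟩, fun i => ?_⟩
    · rw [Matrix.trace_mul_comm, ← Matrix.mul_assoc, hW, Matrix.one_mul, Matrix.trace_diagonal]
      exact_mod_cast hP.2
    · obtain ⟨σ, hσ⟩ := hρn.isHermitian.exists_eigenvalues_eq_comp hW rfl
      obtain ⟨τ, hτ⟩ := exists_eigenvalues_mpow_eq hρ.isHermitian hmp
      rw [hσ, hτ]
      exact hmaj.comp_equiv σ τ
    · rw [← mpow_conjTranspose, ptrExcept_mpow_conj hU, ptrExcept_diagonal]
      simp only [hmarg]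
      exact hdiag.symm
  · rintro ⟨n, hn, ρn, hρn, htr, ⟨hmp, hmaj⟩, hptr⟩
    obtain ⟨V, hV, hV', hVn⟩ := hρn.isHermitian.eq_conj_diagonal
    obtain ⟨τ, hτ⟩ := exists_eigenvalues_mpow_eq hρ.isHermitian hmp
    have hl := Matrix.PosSemidef.isProbVec_eigenvalues hρn htr
    set W := mpow U.conjTranspose n * V with hWdef
    have hWc : W.conjTranspose = V.conjTranspose * mpow U n := by
      rw [hWdef, Matrix.conjTranspose_mul, ← mpow_conjTranspose, Matrix.conjTranspose_conjTranspose]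
    have hW : W.conjTranspose * W = 1 := by
      rw [hWc, hWdef, Matrix.mul_assoc, ← Matrix.mul_assoc (mpow U n), ← mpow_mul, hU', mpow_one,
        Matrix.one_mul, hV]
    have hW' : W * W.conjTranspose = 1 := mul_eq_one_comm.1 hW
    set D := Matrix.diagonal fun x => (hρn.isHermitian.eigenvalues x : ℂ) with hDdef
    have hM : W * D * W.conjTranspose = mpow U.conjTranspose n * ρn * mpow U n := by
      rw [hVn, hWc, hWdef]
      simp only [Matrix.mul_assoc]
    have hD : D.PosSemidef := Matrix.PosSemidef.diagonal fun x => by simpa using hl.1 x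
    have hmajP := pMaj_re_diag_conj hW hW' hρn.isHermitian.eigenvalues
    refine entropy_lt_and_card_support_le hp hq hne (by omega)
      (P := fun x => ((W * D * W.conjTranspose) x x).re) ⟨fun x => ?_, hmajP.2.trans hl.2⟩
      (fun k a => ?_) ?_
    · exact (Complex.le_def.1 (hD.mul_mul_conjTranspose_same W).diag_nonneg).1
    · have h1 := ptrExcept_mpow_conj (V := U.conjTranspose) (by simpa using hU') k ρn
      rw [Matrix.conjTranspose_conjTranspose, ← hM, hptr k] at h1
      have h2 : U.conjTranspose * ρ' * U =
          Matrix.diagonal fun i => (hρ'.isHermitian.eigenvalues i : ℂ) := by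
        conv_lhs => rw [hdiag]
        simp only [Matrix.mul_assoc, hU, Matrix.mul_one]
        rw [← Matrix.mul_assoc, hU, Matrix.one_mul]
      rw [h2] at h1
      have h3 := congrArg Complex.re (congrFun (congrFun h1 a) a)
      rw [ptrExcept_apply_self, Complex.re_sum, Matrix.diagonal_apply_eq,
        Complex.ofReal_re] at h3
      exact h3
    · rw [hτ] at hmaj
      exact hmajP.trans (hmaj.comp_equiv (Equiv.refl _) τ.symm |> fun h => by
        simpa [Function.comp_assoc] using h)
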